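/- arXiv:1811.02346 — 9 statements merged into one kernel-verified Lean document; each statement's English description precedes it below -/
import Mathlib

section
/- Let n ≥ 3 and let Ω ⊆ ℝⁿ be a connected open set. A smooth vector field X : Ω → ℝⁿ is a conformal Killing vector field if and only if there exist α, γ ∈ ℝⁿ, c ∈ ℝ, and a skew-symmetric real n×n matrix B such that X(x) = (α·x)x − (1/2)|x|²α + c·x + Bx + γ for all x ∈ Ω. -/
open scoped BigOperators
open Matrix

noncomputable section

/-- Euclidean dot product on `Fin n → ℝ`. -/
def dotp {n : ℕ} (u v : Fin n → ℝ) : ℝ := ∑ i, u i * v i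

/-- Squared Euclidean norm on `Fin n → ℝ`. -/
def normSq {n : ℕ} (u : Fin n → ℝ) : ℝ := ∑ i, u i ^ 2

/-- `pd X j k x = ∂ⱼ Xₖ (x)`, the partial derivative of the `k`-th component of the
vector field `X` in the `j`-th coordinate direction. -/
def pd {n : ℕ} (X : (Fin n → ℝ) → (Fin n → ℝ)) (j k : Fin n) (x : Fin n → ℝ) : ℝ :=
  fderiv ℝ (fun y => X y k) x (Pi.single j (1 : ℝ))

/-- `pdS f j x = ∂ⱼ f (x)` for a scalar function `f`. -/
def pdS {n : ℕ} (f : (Fin n → ℝ) → ℝ) (j : Fin n) (x : Fin n → ℝ) : ℝ :=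
  fderiv ℝ f x (Pi.single j (1 : ℝ))

/-- Second partial derivative `pd2 X a b c x = ∂ₐ ∂_b X_c (x)`. -/
def pd2 {n : ℕ} (X : (Fin n → ℝ) → (Fin n → ℝ)) (a b c : Fin n) (x : Fin n → ℝ) : ℝ :=
  fderiv ℝ (fun y => pd X b c y) x (Pi.single a (1 : ℝ))

/-- Gradient of a scalar function on `Fin n → ℝ`, as a vector field. -/
def grad {n : ℕ} (φ : (Fin n → ℝ) → ℝ) (x : Fin n → ℝ) : Fin n → ℝ :=
  fun i => fderiv ℝ φ x (Pi.single i (1 : ℝ))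

/-- `X` is a conformal Killing vector field on `Ω`:
`∂ⱼXₖ + ∂ₖXⱼ = λ δⱼₖ` on `Ω` for some scalar function `λ`. -/
def IsCKF {n : ℕ} (Ω : Set (Fin n → ℝ)) (X : (Fin n → ℝ) → (Fin n → ℝ)) : Prop :=
  ∃ lam : (Fin n → ℝ) → ℝ, ∀ x ∈ Ω, ∀ j k : Fin n,
    pd X j k x + pd X k j x = lam x * (if j = k then (1 : ℝ) else 0)

/-- The model conformal Killing field `X_{(α,c,B,γ)}(x) = (α·x)x − ½|x|²α + cx + Bx + γ`. -/
def Xmodel {n : ℕ} (α : Fin n → ℝ) (c : ℝ) (B : Matrix (Fin n) (Fin n) ℝ) (γ : Fin n → ℝ)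
    (x : Fin n → ℝ) : Fin n → ℝ :=
  fun k => dotp α x * x k - (1 / 2) * normSq x * α k + c * x k + B.mulVec x k + γ k

/-- The skew-symmetric matrix `u ∧ v` with entries `(u∧v)ⱼₖ = uⱼvₖ − vⱼuₖ`. -/
def wedge {n : ℕ} (u v : Fin n → ℝ) : Matrix (Fin n) (Fin n) ℝ :=
  Matrix.of fun j k => u j * v k - v j * u k

open scoped ContDiff

section aux
variable {n : ℕ} {Ω : Set (Fin n → ℝ)}

abbrev Sm (Ω : Set (Fin n → ℝ)) (f : (Fin n → ℝ) → ℝ) : Prop := ContDiffOn ℝ (⊤ : ℕ∞) f Ω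

lemma Sm.dat (hΩ : IsOpen Ω) {f : (Fin n → ℝ) → ℝ} (hf : Sm Ω f) {x} (hx : x ∈ Ω) :
    DifferentiableAt ℝ f x :=
  (hf.contDiffAt (hΩ.mem_nhds hx)).differentiableAt (by simp)

lemma Sm.pdS (hΩ : IsOpen Ω) {f : (Fin n → ℝ) → ℝ} (hf : Sm Ω f) (j : Fin n) :
    Sm Ω (pdS f j) := by
  have h : ContDiffOn ℝ (⊤ : ℕ∞) (fderiv ℝ f) Ω := hf.fderiv_of_isOpen hΩ (by simp)
  exact h.clm_apply contDiffOn_const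

lemma pdS_congr (hΩ : IsOpen Ω) {f g : (Fin n → ℝ) → ℝ} (h : ∀ x ∈ Ω, f x = g x) (j : Fin n) :
    ∀ x ∈ Ω, pdS f j x = pdS g j x := by
  intro x hx
  have : f =ᶠ[nhds x] g := Filter.eventually_of_mem (hΩ.mem_nhds hx) h
  unfold pdS
  rw [this.fderiv_eq]

lemma pdS_comm (hΩ : IsOpen Ω) {f : (Fin n → ℝ) → ℝ} (hf : Sm Ω f) (i j : Fin n) :
    ∀ x ∈ Ω, pdS (pdS f i) j x = pdS (pdS f j) i x := by
  intro x hx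
  have h : ContDiffOn ℝ (⊤ : ℕ∞) (fderiv ℝ f) Ω := hf.fderiv_of_isOpen hΩ (by simp)
  have hd : DifferentiableAt ℝ (fderiv ℝ f) x :=
    (h.contDiffAt (hΩ.mem_nhds hx)).differentiableAt (by simp)
  have hs : IsSymmSndFDerivAt ℝ f x :=
    (hf.contDiffAt (hΩ.mem_nhds hx)).isSymmSndFDerivAt (by simp only [minSmoothness_of_isRCLikeNormedField]; exact WithTop.coe_le_coe.2 (le_top : (2 : ℕ∞) ≤ ⊤))
  have key : ∀ a b : Fin n, pdS (pdS f a) b x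
      = fderiv ℝ (fderiv ℝ f) x (Pi.single b 1) (Pi.single a 1) := by
    intro a b
    change fderiv ℝ (fun y => fderiv ℝ f y (Pi.single a 1)) x (Pi.single b 1) = _
    rw [fderiv_clm_apply hd (by fun_prop)]
    simp
  rw [key, key]
  exact hs _ _

lemma eq_const (hΩ : IsOpen Ω) (hc : IsConnected Ω) {f g : (Fin n → ℝ) → ℝ}
    (hf : Sm Ω f) (hg : Sm Ω g) (h : ∀ j, ∀ x ∈ Ω, pdS f j x = pdS g j x) :
    ∃ c, ∀ x ∈ Ω, f x = g x + c := by
  have hfd : ∀ x ∈ Ω, fderiv ℝ f x = fderiv ℝ g x := by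
    intro x hx
    apply ContinuousLinearMap.coe_injective
    apply LinearMap.pi_ext'
    intro j
    ext
    simpa [pdS] using h j x hx
  obtain ⟨x0, h0⟩ := hc.nonempty
  have := hΩ.exists_is_const_of_fderiv_eq_zero (𝕜 := ℝ) (f := fun x => f x - g x)
    hc.isPreconnected
    (fun x hx => ((hf.dat hΩ hx).sub (hg.dat hΩ hx)).differentiableWithinAt)
    (by
      intro x hx
      change fderiv ℝ (fun x => f x - g x) x = 0
      rw [fderiv_fun_sub (hf.dat hΩ hx) (hg.dat hΩ hx), hfd x hx, sub_self])
  obtain ⟨c, hc⟩ := this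
  exact ⟨c, fun x hx => by have := hc x hx; linarith⟩

lemma pdS_add (hΩ : IsOpen Ω) {f g : (Fin n → ℝ) → ℝ} (hf : Sm Ω f) (hg : Sm Ω g) (j : Fin n) :
    ∀ x ∈ Ω, pdS (fun y => f y + g y) j x = pdS f j x + pdS g j x := by
  intro x hx
  unfold pdS
  rw [fderiv_fun_add (hf.dat hΩ hx) (hg.dat hΩ hx)]; rfl

lemma pdS_cmul (hΩ : IsOpen Ω) {f : (Fin n → ℝ) → ℝ} (hf : Sm Ω f) (c : ℝ) (j : Fin n) :
    ∀ x ∈ Ω, pdS (fun y => c * f y) j x = c * pdS f j x := by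
  intro x hx
  unfold pdS
  rw [fderiv_const_mul (hf.dat hΩ hx)]; rfl

lemma pdS_of_hasFDerivAt {f : (Fin n → ℝ) → ℝ} {L : (Fin n → ℝ) →L[ℝ] ℝ} {x : Fin n → ℝ}
    (h : HasFDerivAt f L x) (j : Fin n) :
    pdS f j x = L (Pi.single j 1) := by
  unfold pdS; rw [h.fderiv]

/-- Kronecker delta. -/
def dl (j k : Fin n) : ℝ := if j = k then 1 else 0

lemma dl_comm (j k : Fin n) : dl j k = dl k j := by simp [dl, eq_comm]

lemma hfd_dotp (a x : Fin n → ℝ) :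
    HasFDerivAt (dotp a) (∑ i, a i • (ContinuousLinearMap.proj i : (Fin n → ℝ) →L[ℝ] ℝ)) x := by
  unfold dotp
  exact HasFDerivAt.fun_sum fun i _ => (hasFDerivAt_apply i x).const_mul (a i)

lemma hfd_normSq (x : Fin n → ℝ) :
    HasFDerivAt normSq
      (∑ i, (2 * x i) • (ContinuousLinearMap.proj i : (Fin n → ℝ) →L[ℝ] ℝ)) x := by
  unfold normSq
  refine HasFDerivAt.fun_sum fun i _ => ?_
  simpa using (hasFDerivAt_apply (𝕜 := ℝ) i x).pow 2

lemma sum_single (a : Fin n → ℝ) (j : Fin n) :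
    (∑ i, a i • (ContinuousLinearMap.proj i : (Fin n → ℝ) →L[ℝ] ℝ)) (Pi.single j 1) = a j := by
  simp [Pi.single_apply]

lemma pdS_dotp (a : Fin n → ℝ) (j : Fin n) (x) : pdS (dotp a) j x = a j := by
  rw [pdS_of_hasFDerivAt (hfd_dotp a x), sum_single]

lemma sm_dotp (a : Fin n → ℝ) : Sm Ω (dotp a) := by
  unfold dotp Sm; fun_prop

lemma sm_coord (k : Fin n) : Sm Ω (fun x => x k) := by
  unfold Sm; fun_prop

lemma pdS_Xmodel (α γ : Fin n → ℝ) (c : ℝ) (B : Matrix (Fin n) (Fin n) ℝ) (j k : Fin n) (x) :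
    pdS (fun y => Xmodel α c B γ y k) j x
      = α j * x k + dotp α x * dl j k - x j * α k + c * dl j k + B k j := by
  have hk := hasFDerivAt_apply (𝕜 := ℝ) k x
  have h := (((((hfd_dotp α x).mul hk).sub (((hfd_normSq x).const_mul (1/2)).mul_const (α k))).add
    (hk.const_mul c)).add (hfd_dotp (B k) x)).add_const (γ k)
  have h2 := pdS_of_hasFDerivAt h j
  refine h2.trans ?_
  simp only [ContinuousLinearMap.add_apply, ContinuousLinearMap.sub_apply,
    ContinuousLinearMap.smul_apply, sum_single, ContinuousLinearMap.proj_apply, Pi.single_apply,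
    smul_eq_mul, dl, eq_comm]
  ring

lemma sm_Xmodel (α γ : Fin n → ℝ) (c : ℝ) (B : Matrix (Fin n) (Fin n) ℝ) (k : Fin n) :
    Sm Ω (fun y => Xmodel α c B γ y k) := by
  unfold Sm Xmodel dotp normSq Matrix.mulVec dotProduct; fun_prop

end aux

theorem stmt_0 {n : ℕ} (hn : 3 ≤ n) (Ω : Set (Fin n → ℝ)) (hΩ : IsOpen Ω)
    (hconn : IsConnected Ω) (X : (Fin n → ℝ) → (Fin n → ℝ))
    (hX : ContDiffOn ℝ (⊤ : ℕ∞) X Ω) :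
    IsCKF Ω X ↔
      ∃ (α γ : Fin n → ℝ) (c : ℝ) (B : Matrix (Fin n) (Fin n) ℝ),
        Bᵀ = -B ∧ ∀ x ∈ Ω, X x = Xmodel α c B γ x := by
  constructor
  swap
  · rintro ⟨α, γ, c, B, hB, h⟩
    refine ⟨fun x => 2 * (dotp α x + c), fun x hx j k => ?_⟩
    have hp : ∀ j k, pd X j k x
        = α j * x k + dotp α x * dl j k - x j * α k + c * dl j k + B k j := by
      intro j k
      rw [← pdS_Xmodel α γ c B j k x]
      exact pdS_congr hΩ (fun y hy => by rw [h y hy]) j x hx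
    have hb : B k j = - B j k := by simpa using congrFun (congrFun hB j) k
    rw [hp, hp, dl_comm k j, hb]
    simp only [dl]
    ring
  rintro ⟨lam, hl⟩
  -- components
  obtain ⟨u, hu⟩ : ∃ u : Fin n → (Fin n → ℝ) → ℝ, u = fun k y => X y k := ⟨_, rfl⟩
  have su : ∀ k, Sm Ω (u k) := by
    intro k; subst hu; exact contDiffOn_pi.1 hX k
  have hl' : ∀ j k, ∀ x ∈ Ω, pdS (u k) j x + pdS (u j) k x = lam x * dl j k := by
    intro j k x hx; subst hu; exact hl x hx j k
  let i0 : Fin n := ⟨0, by omega⟩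
  obtain ⟨φ, hφ⟩ : ∃ φ, φ = pdS (u i0) i0 := ⟨_, rfl⟩
  have sφ : Sm Ω φ := hφ ▸ (su i0).pdS hΩ i0
  have hlam : ∀ x ∈ Ω, lam x = 2 * φ x := by
    intro x hx
    have := hl' i0 i0 x hx
    rw [hφ]; simp [dl] at this; linarith
  have h1 : ∀ j k, ∀ x ∈ Ω, pdS (u k) j x + pdS (u j) k x = (2 * dl j k) * φ x := by
    intro j k x hx; rw [hl' j k x hx, hlam x hx]; ring
  have h1' : ∀ i j k, ∀ x ∈ Ω, pdS (pdS (u k) j) i x + pdS (pdS (u j) k) i x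
      = (2 * dl j k) * pdS φ i x := by
    intro i j k x hx
    rw [← pdS_cmul hΩ sφ _ i x hx,
      ← pdS_add hΩ ((su k).pdS hΩ j) ((su j).pdS hΩ k) i x hx]
    exact pdS_congr hΩ (h1 j k) i x hx
  have h2 : ∀ i j k, ∀ x ∈ Ω, pdS (pdS (u k) j) i x
      = (dl j k * pdS φ i x + dl i k * pdS φ j x) + (- dl i j) * pdS φ k x := by
    intro i j k x hx
    have a := h1' i j k x hx
    have b := h1' j i k x hx
    have c := h1' k i j x hx
    rw [pdS_comm hΩ (su k) i j x hx] at b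
    rw [pdS_comm hΩ (su i) j k x hx] at c
    rw [pdS_comm hΩ (su j) i k x hx] at c
    linarith
  have sp := fun i => sφ.pdS hΩ i
  have h3 : ∀ l i j k, ∀ x ∈ Ω, pdS (pdS (pdS (u k) j) i) l x
      = (dl j k * pdS (pdS φ i) l x + dl i k * pdS (pdS φ j) l x)
        + (- dl i j) * pdS (pdS φ k) l x := by
    intro l i j k x hx
    rw [pdS_congr hΩ (h2 i j k) l x hx,
      pdS_add hΩ (ContDiffOn.add (contDiffOn_const.mul (sp i)) (contDiffOn_const.mul (sp j)))
        (contDiffOn_const.mul (sp k)) l x hx,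
      pdS_add hΩ (contDiffOn_const.mul (sp i)) (contDiffOn_const.mul (sp j)) l x hx,
      pdS_cmul hΩ (sp i) _ l x hx, pdS_cmul hΩ (sp j) _ l x hx, pdS_cmul hΩ (sp k) _ l x hx]
  have h4 : ∀ l i j k, ∀ x ∈ Ω,
      dl i k * pdS (pdS φ j) l x - dl i j * pdS (pdS φ k) l x
      = dl l k * pdS (pdS φ j) i x - dl l j * pdS (pdS φ k) i x := by
    intro l i j k x hx
    have a := h3 l i j k x hx
    have b := h3 i l j k x hx
    rw [pdS_comm hΩ ((su k).pdS hΩ j) i l x hx, pdS_comm hΩ sφ i l x hx] at a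
    linarith
  have hpair : ∀ i j, i ≠ j → ∀ x ∈ Ω, pdS (pdS φ j) j x = - pdS (pdS φ i) i x := by
    intro i j hij x hx
    have := h4 j i j i x hx
    simp [dl, hij, hij.symm] at this
    linarith
  have third : ∀ a b : Fin n, ∃ c : Fin n, c ≠ a ∧ c ≠ b := by
    intro a b
    have : ∃ c ∈ (Finset.univ : Finset (Fin n)), c ∉ ({a, b} : Finset (Fin n)) := by
      apply Finset.exists_mem_notMem_of_card_lt_card
      have := Finset.card_le_two (a := a) (b := b)
      simp; omega
    obtain ⟨c, -, hc⟩ := this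
    simp at hc
    exact ⟨c, hc.1, hc.2⟩
  have h5 : ∀ i j, ∀ x ∈ Ω, pdS (pdS φ i) j x = 0 := by
    intro j l x hx
    by_cases hjl : j = l
    · subst hjl
      obtain ⟨a, ha, -⟩ := third j j
      obtain ⟨b, hb, hb'⟩ := third j a
      have e1 := hpair j a ha.symm x hx
      have e2 := hpair j b hb.symm x hx
      have e3 := hpair a b hb'.symm x hx
      linarith
    · obtain ⟨i, hi, hi'⟩ := third j l
      have := h4 l i j i x hx
      simp [dl, hi, Ne.symm hi', Ne.symm hjl] at this
      exact this
  have hz : ∀ j x, pdS (fun _ : Fin n → ℝ => (0:ℝ)) j x = 0 := by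
    intro j x; simp [pdS]
  have h6 : ∀ j, ∃ a, ∀ x ∈ Ω, pdS φ j x = 0 + a := fun j =>
    eq_const hΩ hconn (g := fun _ => 0) (sp j) contDiffOn_const
      (fun i x hx => by rw [h5 j i x hx, hz])
  choose α hα using h6
  simp only [zero_add] at hα
  obtain ⟨c, hc⟩ := eq_const hΩ hconn (g := dotp α) sφ (sm_dotp α)
    (fun i x hx => by rw [hα i x hx, pdS_dotp])
  have h7 : ∀ j k, ∃ m, ∀ x ∈ Ω, pdS (u k) j x
      = dotp (fun i => dl j k * α i + dl i k * α j - dl i j * α k) x + m := fun j k =>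
    eq_const hΩ hconn ((su k).pdS hΩ j) (sm_dotp _) (fun i x hx => by
      rw [pdS_dotp, h2 i j k x hx, hα i x hx, hα j x hx, hα k x hx]; ring)
  choose M hM using h7
  have hdot : ∀ j k x, dotp (fun i => dl j k * α i + dl i k * α j - dl i j * α k) x
      = dl j k * dotp α x + x k * α j - x j * α k := by
    intro j k x
    simp only [dotp, dl, sub_mul, add_mul, Finset.sum_sub_distrib, Finset.sum_add_distrib,
      Finset.mul_sum]
    simp [mul_comm]
  obtain ⟨x0, hx0⟩ := hconn.nonempty
  have hMs : ∀ j k, M j k + M k j = 2 * c * dl j k := by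
    intro j k
    have := h1 j k x0 hx0
    rw [hM j k x0 hx0, hM k j x0 hx0, hdot, hdot, hc x0 hx0, dl_comm k j] at this
    linarith
  obtain ⟨B, hB⟩ : ∃ B : Matrix (Fin n) (Fin n) ℝ, B = Matrix.of fun k j => M j k - c * dl j k :=
    ⟨_, rfl⟩
  have h8 : ∀ k, ∃ g, ∀ x ∈ Ω, u k x = Xmodel α c B 0 x k + g := fun k =>
    eq_const hΩ hconn (su k) (sm_Xmodel α 0 c B k) (fun j x hx => by
      rw [pdS_Xmodel, hM j k x hx, hdot, hB]; simp only [Matrix.of_apply]; ring)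
  choose γ hγ using h8
  refine ⟨α, γ, c, B, ?_, ?_⟩
  · ext j k
    have := hMs j k
    rw [hB]
    simp only [Matrix.transpose_apply, Matrix.neg_apply, Matrix.of_apply]
    rw [dl_comm k j]
    linarith
  · intro x hx
    funext k
    have := hγ k x hx
    rw [hu] at this
    simp only [Xmodel, Pi.zero_apply] at this ⊢
    linarith
end
end

section
/- Let n ≥ 3, let Ω, Ω̃ ⊆ ℝⁿ be open sets, let F : Ω̃ → Ω be a smooth map, and let κ : Ω̃ → (0,∞) be a smooth function such that κ(x)·DF(x)ᵀ·DF(x) = Id for all x ∈ Ω̃ (i.e. F is conformal). If X : Ω → ℝⁿ is a smooth conformal Killing vector field, then the vector field X̃(x) := κ(x)·DF(x)ᵀ·X(F(x)) is a conformal Killing vector field on Ω̃. -/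
open scoped BigOperators
open Matrix

noncomputable section

/-- The Jacobian matrix of a map `F : ℝⁿ → ℝⁿ` at `x`, with entries `(DF)ⱼₖ = ∂ₖFⱼ`. -/
def jac {n : ℕ} (F : (Fin n → ℝ) → (Fin n → ℝ)) (x : Fin n → ℝ) :
    Matrix (Fin n) (Fin n) ℝ :=
  Matrix.of fun j k => fderiv ℝ (fun y => F y j) x (Pi.single k (1 : ℝ))

/-- The pointwise algebraic identity behind the theorem. -/
theorem alg_core {n : ℕ} (κ : ℝ) (hκ : 0 < κ) (J P : Matrix (Fin n) (Fin n) ℝ)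
    (H : Fin n → Fin n → Fin n → ℝ) (K Y : Fin n → ℝ) (lam : ℝ)
    (hJ : κ • (Jᵀ * J) = 1) (hsymm : ∀ i j k, H i j k = H i k j)
    (hd : ∀ l j k, K l * (∑ i, J i j * J i k)
      + κ * ∑ i, (H i l j * J i k + J i j * H i l k) = 0)
    (hP : ∀ j k, P j k + P k j = lam * (if j = k then (1 : ℝ) else 0))
    (j k : Fin n) :
    (K j * (∑ i, J i k * Y i) + κ * ∑ i, (H i j k * Y i + J i k * ∑ l, P l i * J l j)) +
    (K k * (∑ i, J i j * Y i) + κ * ∑ i, (H i k j * Y i + J i j * ∑ l, P l i * J l k)) =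
    (lam + ∑ m, K m * (∑ i, J i m * Y i)) * (if j = k then (1 : ℝ) else 0) := by
  have hg : ∀ j k, κ * ∑ i, J i j * J i k = if j = k then (1 : ℝ) else 0 := by
    intro j k
    have := congrFun (congrFun hJ j) k
    simpa [Matrix.mul_apply, Matrix.one_apply] using this
  have hJ2 : J * (κ • Jᵀ) = 1 := by
    apply mul_eq_one_comm.mp
    simpa using hJ
  set W : Fin n → ℝ := fun m => ∑ i, J i m * Y i with hW
  have hY : ∀ i, Y i = κ * ∑ m, J i m * W m := by
    intro i
    have h1 : (J * (κ • Jᵀ)) *ᵥ Y = Y := by rw [hJ2, Matrix.one_mulVec]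
    have h2 := congrFun h1 i
    rw [← h2, ← Matrix.mulVec_mulVec]
    simp only [Matrix.mulVec, dotProduct, Matrix.smul_apply, Matrix.transpose_apply, hW,
      Finset.mul_sum, smul_eq_mul]
    refine Finset.sum_congr rfl fun m _ => Finset.sum_congr rfl fun l _ => by ring
  set Γ : Fin n → Fin n → Fin n → ℝ := fun l j k => ∑ i, H i l j * J i k with hΓ
  have hΓs : ∀ l j k, Γ l j k = Γ j l k := by
    intro l j k
    simp only [hΓ]
    exact Finset.sum_congr rfl fun i _ => by rw [hsymm]
  have hΓd : ∀ l j k, K l * (if j = k then (1 : ℝ) else 0) + κ ^ 2 * (Γ l j k + Γ l k j) = 0 := by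
    intro l j k
    have e : ∑ i, (H i l j * J i k + J i j * H i l k) = Γ l j k + Γ l k j := by
      simp only [hΓ, ← Finset.sum_add_distrib]
      exact Finset.sum_congr rfl fun i _ => by ring
    have h := hd l j k
    rw [e] at h
    rw [← hg j k]
    linear_combination κ * h
  have hΓf : ∀ m, 2 * κ ^ 2 * Γ j k m = - K j * (if k = m then (1 : ℝ) else 0)
      - K k * (if j = m then (1 : ℝ) else 0) + K m * (if j = k then (1 : ℝ) else 0) := by
    intro m
    have h1 := hΓd j k m
    have h2 := hΓd k j m
    have h3 := hΓd m j k
    rw [hΓs m j k, hΓs m k j] at h3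
    rw [hΓs k j m] at h2
    linear_combination h1 + h2 - h3
  have hHY : 2 * κ * ∑ i, H i j k * Y i = - K j * W k - K k * W j
      + (∑ m, K m * W m) * (if j = k then (1 : ℝ) else 0) := by
    have e1 : 2 * κ * ∑ i, H i j k * Y i = ∑ m, (2 * κ ^ 2 * Γ j k m) * W m := by
      simp only [hY, hΓ, Finset.mul_sum, Finset.sum_mul]
      rw [Finset.sum_comm]
      refine Finset.sum_congr rfl fun m _ => Finset.sum_congr rfl fun l _ => by ring
    rw [e1]
    simp only [hΓf, add_mul, sub_mul, Finset.sum_add_distrib, Finset.sum_sub_distrib,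
      Finset.sum_mul]
    congr 1
    · simp
    · exact Finset.sum_congr rfl fun i _ => by ring
  have hPP : κ * (∑ i, J i k * ∑ l, P l i * J l j) + κ * (∑ i, J i j * ∑ l, P l i * J l k)
      = lam * (if j = k then (1 : ℝ) else 0) := by
    have e1 : ∑ i, J i j * ∑ l, P l i * J l k = ∑ i, J i k * ∑ l, P i l * J l j := by
      simp only [Finset.mul_sum]
      rw [Finset.sum_comm]
      refine Finset.sum_congr rfl fun m _ => Finset.sum_congr rfl fun l _ => by ring
    rw [e1, ← mul_add, ← Finset.sum_add_distrib]
    have e2 : ∀ i, J i k * ∑ l, P l i * J l j + J i k * ∑ l, P i l * J l j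
        = lam * (J i j * J i k) := by
      intro i
      rw [← mul_add, ← Finset.sum_add_distrib]
      simp only [← add_mul, hP]
      simp
      ring
    simp only [e2, ← Finset.mul_sum]
    rw [← hg j k]
    ring
  have hs : ∑ i, H i k j * Y i = ∑ i, H i j k * Y i :=
    Finset.sum_congr rfl fun i _ => by rw [hsymm]
  simp only [Finset.sum_add_distrib, mul_add]
  rw [hs]
  change K j * W k + _ + (K k * W j + _) = (lam + ∑ m, K m * W m) * _
  linear_combination hHY + hPP

/-- pullback of a conformal Killing field by a conformal map is
conformal Killing. -/
theorem stmt_3 {n : ℕ} (hn : 3 ≤ n) (Ω Ω' : Set (Fin n → ℝ))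
    (hΩ : IsOpen Ω) (hΩ' : IsOpen Ω')
    (F : (Fin n → ℝ) → (Fin n → ℝ)) (hF : ContDiffOn ℝ (⊤ : ℕ∞) F Ω')
    (hmaps : Set.MapsTo F Ω' Ω)
    (κ : (Fin n → ℝ) → ℝ) (hκ : ContDiffOn ℝ (⊤ : ℕ∞) κ Ω')
    (hκpos : ∀ x ∈ Ω', 0 < κ x)
    (hconf : ∀ x ∈ Ω', κ x • ((jac F x)ᵀ * jac F x) = (1 : Matrix (Fin n) (Fin n) ℝ))
    (X : (Fin n → ℝ) → (Fin n → ℝ)) (hX : ContDiffOn ℝ (⊤ : ℕ∞) X Ω)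
    (hckf : IsCKF Ω X) :
    IsCKF Ω' (fun x => κ x • (jac F x)ᵀ.mulVec (X (F x))) := by
  obtain ⟨lam, hlam⟩ := hckf
  refine ⟨fun x => lam (F x) + ∑ m, pdS κ m x * (∑ i, jac F x i m * X (F x) i), ?_⟩
  intro x hx j k
  have hnx : Ω' ∈ nhds x := hΩ'.mem_nhds hx
  have hFx : ContDiffAt ℝ (⊤ : ℕ∞) F x := hF.contDiffAt hnx
  have hκx : DifferentiableAt ℝ κ x := (hκ.contDiffAt hnx).differentiableAt (by simp)
  have hXx : DifferentiableAt ℝ X (F x) :=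
    (hX.contDiffAt (hΩ.mem_nhds (hmaps hx))).differentiableAt (by simp)
  have hFi : ∀ i, ContDiffAt ℝ (⊤ : ℕ∞) (fun y => F y i) x := fun i => contDiffAt_pi.mp hFx i
  have hDF : ∀ i, DifferentiableAt ℝ (fderiv ℝ (fun y => F y i)) x := fun i =>
    ((hFi i).fderiv_right (m := 1) (by norm_cast)).differentiableAt (by simp)
  have hJd : ∀ i k, DifferentiableAt ℝ (fun y => jac F y i k) x := fun i k =>
    (hDF i).clm_apply (differentiableAt_const _)
  have hXd : ∀ i, DifferentiableAt ℝ (fun y => X y i) (F x) := fun i =>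
    differentiableAt_pi.mp hXx i
  have hFd : DifferentiableAt ℝ F x := hFx.differentiableAt (by simp)
  have hYd : ∀ i, DifferentiableAt ℝ (fun y => X (F y) i) x := fun i =>
    (hXd i).comp x hFd
  let H : Fin n → Fin n → Fin n → ℝ := fun i l j =>
    fderiv ℝ (fun y => jac F y i j) x (Pi.single l (1 : ℝ))
  have hHsymm : ∀ i j k, H i j k = H i k j := by
    have key : ∀ i l j, H i l j = fderiv ℝ (fderiv ℝ (fun y => F y i)) x
        (Pi.single l (1 : ℝ)) (Pi.single j (1 : ℝ)) := by
      intro i l j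
      change fderiv ℝ (fun y => fderiv ℝ (fun y => F y i) y (Pi.single j (1 : ℝ))) x _ = _
      rw [fderiv_clm_apply (hDF i) (differentiableAt_const _)]
      simp
    intro i j k
    rw [key, key]
    exact ((hFi i).isSymmSndFDerivAt (by simp; norm_cast)).eq _ _
  have hd : ∀ l j k, pdS κ l x * (∑ i, jac F x i j * jac F x i k)
      + κ x * ∑ i, (H i l j * jac F x i k + jac F x i j * H i l k) = 0 := by
    intro l j k
    have hc : (fun y => κ y * ∑ i, jac F y i j * jac F y i k) =ᶠ[nhds x]
        fun _ => (1 : Matrix (Fin n) (Fin n) ℝ) j k := by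
      filter_upwards [hnx] with y hy
      have := congrFun (congrFun (hconf y hy) j) k
      simpa [Matrix.mul_apply] using this
    have h0 := hc.fderiv_eq (𝕜 := ℝ)
    have hs : HasFDerivAt (fun y => κ y * ∑ i, jac F y i j * jac F y i k) _ x :=
      hκx.hasFDerivAt.mul (HasFDerivAt.fun_sum (u := Finset.univ) fun i _ =>
        (hJd i j).hasFDerivAt.mul (hJd i k).hasFDerivAt)
    rw [hs.fderiv] at h0
    have h1 := congrArg (fun L => L (Pi.single l (1 : ℝ))) h0
    simp at h1
    rw [← h1]
    simp only [H, pdS]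
    rw [add_comm, mul_comm (fderiv ℝ κ x _)]
    congr 2
    exact Finset.sum_congr rfl fun i _ => by ring
  have hYder : ∀ i j, fderiv ℝ (fun y => X (F y) i) x (Pi.single j (1 : ℝ)) =
      ∑ l, pd X l i (F x) * jac F x l j := by
    intro i j
    have h1 : HasFDerivAt (fun y => X (F y) i) _ x :=
      (hXd i).hasFDerivAt.comp x hFd.hasFDerivAt
    rw [h1.fderiv, ContinuousLinearMap.comp_apply]
    have h2 : fderiv ℝ F x (Pi.single j (1 : ℝ)) = fun l => jac F x l j := by
      funext l
      have := (hasFDerivAt_pi'.mp hFd.hasFDerivAt l).fderiv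
      change _ = fderiv ℝ (fun y => F y l) x _
      rw [this]
      rfl
    rw [h2]
    have h3 : (fun l => jac F x l j) = ∑ l, jac F x l j • (Pi.single l (1 : ℝ) : Fin n → ℝ) := by
      funext m
      simp [Finset.sum_apply, Pi.single_apply]
    rw [h3, map_sum]
    refine Finset.sum_congr rfl fun l _ => ?_
    rw [map_smul, smul_eq_mul, mul_comm]
    rfl
  have hpd : ∀ j k, pd (fun x => κ x • (jac F x)ᵀ.mulVec (X (F x))) j k x =
      pdS κ j x * (∑ i, jac F x i k * X (F x) i) + κ x * ∑ i, (H i j k * X (F x) i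
        + jac F x i k * ∑ l, pd X l i (F x) * jac F x l j) := by
    intro j k
    have hs : HasFDerivAt (fun y => κ y * ∑ i, jac F y i k * X (F y) i) _ x :=
      hκx.hasFDerivAt.mul (HasFDerivAt.fun_sum (u := Finset.univ) fun i _ =>
        (hJd i k).hasFDerivAt.mul (hYd i).hasFDerivAt)
    change fderiv ℝ (fun y => κ y * ∑ i, jac F y i k * X (F y) i) x _ = _
    rw [hs.fderiv]
    simp [hYder]
    simp only [H, pdS]
    rw [add_comm, mul_comm (fderiv ℝ κ x _)]
    congr 2
    exact Finset.sum_congr rfl fun i _ => by ring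
  rw [hpd, hpd]
  exact alg_core (κ x) (hκpos x hx) (jac F x) (Matrix.of fun j k => pd X j k (F x)) H
    (fun l => pdS κ l x) (X (F x)) (lam (F x)) (hconf x hx) hHsymm hd
    (fun j k => hlam (F x) (hmaps hx) j k) j k
end
end

section
/- Let n ≥ 3, α, γ, x₀ ∈ ℝⁿ, c ∈ ℝ, and let B be a skew-symmetric real n×n matrix. Then for all x ∈ ℝⁿ: X₍α,c,B,γ₎(x − x₀) = X₍α̃,c̃,B̃,γ̃₎(x), where α̃ = α, c̃ = c − α·x₀, B̃ = B + α∧x₀, and γ̃ = γ + (α·x₀)x₀ − (1/2)|x₀|²α − c·x₀ − Bx₀. (This is the action of the translation F(x) = x − x₀ on conformal Killing vector fields of ℝⁿ.) -/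
open scoped BigOperators
open Matrix

noncomputable section

/-- action of the translation `F(x) = x − x₀` on the conformal Killing
fields `X_{(α,c,B,γ)}` of `ℝⁿ`. -/
theorem stmt_4 {n : ℕ} (hn : 3 ≤ n) (α γ x₀ : Fin n → ℝ) (c : ℝ)
    (B : Matrix (Fin n) (Fin n) ℝ) (hB : Bᵀ = -B) (x : Fin n → ℝ) :
    Xmodel α c B γ (x - x₀) =
      Xmodel α (c - dotp α x₀) (B + wedge α x₀)
        (γ + dotp α x₀ • x₀ - ((1 / 2) * normSq x₀) • α - c • x₀ - B.mulVec x₀) x := by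
  have h1 : dotp α (x - x₀) = dotp α x - dotp α x₀ := by
    simp [dotp, mul_sub, Finset.sum_sub_distrib]
  have h2 : normSq (x - x₀) = normSq x - 2 * dotp x₀ x + normSq x₀ := by
    simp only [dotp, normSq, Finset.mul_sum, ← Finset.sum_sub_distrib, ← Finset.sum_add_distrib]
    refine Finset.sum_congr rfl fun i _ => ?_
    simp only [Pi.sub_apply]
    ring
  have h3 : ∀ k, (wedge α x₀).mulVec x k = α k * dotp x₀ x - x₀ k * dotp α x := by
    intro k
    simp only [wedge, Matrix.mulVec, dotProduct, Matrix.of_apply, dotp, Finset.mul_sum,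
      ← Finset.sum_sub_distrib]
    refine Finset.sum_congr rfl fun i _ => ?_
    ring
  funext k
  simp only [Xmodel, h1, h2, Matrix.mulVec_sub, Matrix.add_mulVec, Pi.add_apply, Pi.sub_apply,
    Pi.smul_apply, smul_eq_mul, h3]
  ring
end
end

section
/- Let n ≥ 3, let Ω ⊆ ℝⁿ be a connected open set, let α, γ ∈ ℝⁿ, c ∈ ℝ, and let B be a skew-symmetric real n×n matrix. Suppose the vector field X = X₍α,c,B,γ₎ is nowhere vanishing on Ω and the vector field |X|⁻²X is curl-free on Ω, i.e. ∂ⱼ(|X|⁻²Xₖ) = ∂ₖ(|X|⁻²Xⱼ) for all j,k (this holds in particular when X = |∇φ|⁻²∇φ for a limiting Carleman weight φ on Ω). Then: (i) Bⱼₖγₗ + Bₖₗγⱼ + Bₗⱼγₖ = 0 for all 1 ≤ j,k,l ≤ n; and (ii) c·B = γ∧α, i.e. c·Bⱼₖ = γⱼαₖ − αⱼγₖ for all 1 ≤ j,k ≤ n. -/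
open scoped BigOperators
open Matrix

noncomputable section

open scoped ContDiff in
theorem Xmodel_contDiff {n : ℕ} (α γ : Fin n → ℝ) (c : ℝ) (B : Matrix (Fin n) (Fin n) ℝ)
    (k : Fin n) : ContDiff ℝ ω (fun x => Xmodel α c B γ x k) := by
  unfold Xmodel dotp normSq Matrix.mulVec dotProduct
  fun_prop

theorem pd_Xmodel {n : ℕ} (α γ : Fin n → ℝ) (c : ℝ) (B : Matrix (Fin n) (Fin n) ℝ)
    (j k : Fin n) (x : Fin n → ℝ) : pd (Xmodel α c B γ) j k x =
      α j * x k - x j * α k + B k j + (dotp α x + c) * (if k = j then 1 else 0) := by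
  have hp : ∀ i : Fin n, HasFDerivAt (fun y : Fin n → ℝ => y i)
      (ContinuousLinearMap.proj (R := ℝ) (φ := fun _ : Fin n => ℝ) i) x :=
    fun i => hasFDerivAt_apply i x
  have h1 : HasFDerivAt (fun y => dotp α y) (∑ i, α i •
      (ContinuousLinearMap.proj (R := ℝ) (φ := fun _ : Fin n => ℝ) i)) x := by
    unfold dotp
    exact HasFDerivAt.fun_sum fun i _ => (hp i).const_mul (α i)
  have h2 : HasFDerivAt (fun y : Fin n → ℝ => normSq y) (∑ i, (2 * x i) •
      (ContinuousLinearMap.proj (R := ℝ) (φ := fun _ : Fin n => ℝ) i)) x := by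
    unfold normSq
    refine HasFDerivAt.fun_sum fun i _ => ?_
    simpa using (hp i).pow 2
  have h3 : HasFDerivAt (fun y => B.mulVec y k) (∑ i, B k i •
      (ContinuousLinearMap.proj (R := ℝ) (φ := fun _ : Fin n => ℝ) i)) x := by
    unfold Matrix.mulVec dotProduct
    exact HasFDerivAt.fun_sum fun i _ => (hp i).const_mul (B k i)
  have h := ((((h1.mul (hp k)).sub ((h2.const_mul (1/2)).mul_const (α k))).add
    ((hp k).const_mul c)).add h3).add_const (γ k)
  unfold pd
  have e : (fun y => Xmodel α c B γ y k) = fun y => dotp α y * y k - (1 / 2) * normSq y * α k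
    + c * y k + B.mulVec y k + γ k := rfl
  rw [e]
  erw [h.fderiv]
  simp [Pi.single_apply]
  split_ifs <;> ring

theorem pd_normalized {n : ℕ} (X : (Fin n → ℝ) → (Fin n → ℝ)) (x : Fin n → ℝ)
    (hX : ∀ k, DifferentiableAt ℝ (fun y => X y k) x) (h0 : normSq (X x) ≠ 0) (j k : Fin n) :
    pd (fun y => (normSq (X y))⁻¹ • X y) j k x * normSq (X x) ^ 2 =
      normSq (X x) * pd X j k x - 2 * (∑ i, X x i * pd X j i x) * X x k := by
  have h2 : HasFDerivAt (fun y => normSq (X y)) (∑ i, (2 * X x i) •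
      fderiv ℝ (fun y => X y i) x) x := by
    unfold normSq
    refine HasFDerivAt.fun_sum fun i _ => ?_
    simpa using (hX i).hasFDerivAt.pow 2
  have h3 := ((hasDerivAt_inv h0).comp_hasFDerivAt x h2).mul (hX k).hasFDerivAt
  unfold pd
  have e : (fun y => ((normSq (X y))⁻¹ • X y) k) = fun y => (normSq (X y))⁻¹ * X y k := rfl
  rw [e]
  erw [h3.fderiv]
  simp [mul_assoc, ← Finset.mul_sum]
  field_simp
  ring

/-- restrictions on the parameters `(α, c, B, γ)` of a conformal Killing
field `X` which is nonvanishing and has `|X|⁻²X♭` closed on a connected open set: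
`B ∧ γ = 0` and `cB = γ ∧ α`. -/
theorem stmt_10 {n : ℕ} (hn : 3 ≤ n) (Ω : Set (Fin n → ℝ)) (hΩ : IsOpen Ω)
    (hconn : IsConnected Ω) (α γ : Fin n → ℝ) (c : ℝ)
    (B : Matrix (Fin n) (Fin n) ℝ) (hB : Bᵀ = -B)
    (hX0 : ∀ x ∈ Ω, Xmodel α c B γ x ≠ 0)
    (hclosed : ∀ x ∈ Ω, ∀ j k : Fin n,
      pd (fun y => (normSq (Xmodel α c B γ y))⁻¹ • Xmodel α c B γ y) j k x
        = pd (fun y => (normSq (Xmodel α c B γ y))⁻¹ • Xmodel α c B γ y) k j x) :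
    (∀ j k l : Fin n, B j k * γ l + B k l * γ j + B l j * γ k = 0) ∧
    (∀ j k : Fin n, c * B j k = γ j * α k - α j * γ k) := by
  have hBs : ∀ j k, B j k = - B k j := fun j k => by
    have := congrFun (congrFun hB k) j
    simpa using this
  let F : Fin n → Fin n → Fin n → (Fin n → ℝ) → ℝ := fun j k l x =>
    (α j * x k - x j * α k - B j k) * Xmodel α c B γ x l +
    (α k * x l - x k * α l - B k l) * Xmodel α c B γ x j +
    (α l * x j - x l * α j - B l j) * Xmodel α c B γ x k
  have hFΩ : ∀ j k l, ∀ x ∈ Ω, F j k l x = 0 := by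
    intro j k l x hx
    have hN : normSq (Xmodel α c B γ x) ≠ 0 := by
      intro h
      apply hX0 x hx
      unfold normSq at h
      rw [Finset.sum_eq_zero_iff_of_nonneg (fun i _ => sq_nonneg _)] at h
      ext i
      simpa using h i (Finset.mem_univ i)
    have hd : ∀ k, DifferentiableAt ℝ (fun y => Xmodel α c B γ y k) x := fun k =>
      (Xmodel_contDiff α γ c B k).contDiffAt.differentiableAt (by simp)
    let W : Fin n → ℝ := fun j => ∑ i, Xmodel α c B γ x i * (α j * x i - x j * α i + B i j)
    have hs : ∀ j, ∑ i, Xmodel α c B γ x i * pd (Xmodel α c B γ) j i x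
        = W j + (dotp α x + c) * Xmodel α c B γ x j := by
      intro j
      simp only [pd_Xmodel, W, mul_add _ _ ((dotp α x + c) * _), Finset.sum_add_distrib]
      congr 1
      simp [mul_comm]
    have key : ∀ j k, normSq (Xmodel α c B γ x) * (α j * x k - x j * α k - B j k)
        = W j * Xmodel α c B γ x k - W k * Xmodel α c B γ x j := by
      intro j k
      have h1 := pd_normalized (Xmodel α c B γ) x hd hN j k
      have h2 := pd_normalized (Xmodel α c B γ) x hd hN k j
      rw [hclosed x hx j k, h2, hs, hs, pd_Xmodel, pd_Xmodel] at h1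
      have e : (if k = j then (1:ℝ) else 0) = if j = k then 1 else 0 := by
        simp only [eq_comm]
      rw [e, hBs k j] at h1
      linear_combination (-1/2) * h1
    apply mul_left_cancel₀ hN
    simp only [F]
    linear_combination Xmodel α c B γ x l * key j k + Xmodel α c B γ x j * key k l
      + Xmodel α c B γ x k * key l j
  have hF : ∀ j k l x, F j k l x = 0 := by
    intro j k l x
    have hc : ContDiff ℝ ⊤ (F j k l) := by
      have h1 := Xmodel_contDiff α γ c B j
      have h2 := Xmodel_contDiff α γ c B k
      have h3 := Xmodel_contDiff α γ c B l
      simp only [F]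
      fun_prop
    have ha : AnalyticOnNhd ℝ (F j k l) Set.univ := fun y _ => hc.contDiffAt.analyticAt
    obtain ⟨x0, hx0⟩ := hconn.nonempty
    have := ha.eqOn_zero_of_preconnected_of_eventuallyEq_zero isPreconnected_univ
      (Set.mem_univ x0) (Filter.eventually_of_mem (hΩ.mem_nhds hx0) (hFΩ j k l))
    exact this (Set.mem_univ x)
  constructor
  · intro j k l
    have := hF j k l 0
    simp [F, Xmodel, dotp, normSq] at this
    linear_combination -this
  · intro j k
    by_cases hjk : j = k
    · subst hjk
      have := hBs j j
      have h0 : B j j = 0 := by linarith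
      rw [h0]; ring
    obtain ⟨m, hm⟩ : ∃ m : Fin n, m ∉ ({j, k} : Finset (Fin n)) := by
      apply Finset.exists_mem_notMem_of_card_lt_card (s := {j, k}) (t := Finset.univ) _ |>.imp
      · intro a h; exact h.2
      · have := Finset.card_le_two (a := j) (b := k)
        simp only [Finset.card_univ, Fintype.card_fin]; omega
    simp only [Finset.mem_insert, Finset.mem_singleton, not_or] at hm
    obtain ⟨hmj, hmk⟩ := hm
    have hmm : B m m = 0 := by have := hBs m m; linarith
    have hL : ∀ t : ℝ, F j k m (Pi.single m t) = 0 := fun t => hF j k m _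
    have hv : ∀ t : ℝ,
        (-B j k) * (α m * t * t - 1/2 * t^2 * α m + c * t + γ m) +
        (α k * t - B k m) * (- (1/2) * t^2 * α j + B j m * t + γ j) +
        (-t * α j + B j m) * (- (1/2) * t^2 * α k + B k m * t + γ k) = 0 := by
      intro t
      have h := hL t
      have e1 : dotp α (Pi.single m t) = α m * t := by simp [dotp, Pi.single_apply]
      have e2 : normSq (Pi.single m t : Fin n → ℝ) = t ^ 2 := by
        simp [normSq, Pi.single_apply, ite_pow]
      simp only [F, Xmodel, e1, e2, Matrix.mulVec_single, Pi.single_apply, Ne.symm hmj,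
        Ne.symm hmk, if_false, if_true] at h
      simp [hmm, hBs m j] at h
      linear_combination h
    have a1 := hv 1
    have a2 := hv (-1)
    have a3 := hv 2
    have a4 := hv (-2)
    linear_combination (-8/12) * (a1 - a2) + (1/12) * (a3 - a4)
end
end

section
/- Let n ≥ 3, let γ ∈ ℝⁿ with |γ| = 1, let s > 0, and let Ω = {x ∈ ℝⁿ : |x|² ≠ s}. Define φ(x) = (1/√s)·arctan( (−2γ·x/√s)/(|x|²/s − 1) ) on Ω. Then φ is smooth on Ω, ∇φ is nowhere vanishing on Ω, and for all x ∈ Ω: ∇φ(x)/|∇φ(x)|² = (γ·x)x − (1/2)|x|²γ + (s/2)γ. -/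
open scoped BigOperators
open Matrix

noncomputable section

/-- The weight `φ(x) = (1/√s) arctan( (−2γ·x/√s) / (|x|²/s − 1) )`. -/
def phi14 {n : ℕ} (γ : Fin n → ℝ) (s : ℝ) (x : Fin n → ℝ) : ℝ :=
  (Real.sqrt s)⁻¹ * Real.arctan ((-2 * dotp γ x / Real.sqrt s) / (normSq x / s - 1))

lemma hasFDerivAt_dotp {n : ℕ} (γ x : Fin n → ℝ) :
    HasFDerivAt (fun y => dotp γ y)
      (∑ i, γ i • (ContinuousLinearMap.proj i : (Fin n → ℝ) →L[ℝ] ℝ)) x := by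
  unfold dotp
  apply HasFDerivAt.fun_sum
  intro i _
  exact (hasFDerivAt_apply i x).const_mul (γ i)

lemma hasFDerivAt_normSq {n : ℕ} (x : Fin n → ℝ) :
    HasFDerivAt (fun y => normSq y)
      (∑ i, (2 * x i) • (ContinuousLinearMap.proj i : (Fin n → ℝ) →L[ℝ] ℝ)) x := by
  unfold normSq
  apply HasFDerivAt.fun_sum
  intro i _
  have h := (hasFDerivAt_apply (𝕜 := ℝ) i x).pow 2
  simpa using h

lemma phi14_ne {n : ℕ} (s : ℝ) (hs : 0 < s) (x : Fin n → ℝ)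
    (hx : normSq x ≠ s) : normSq x / s - 1 ≠ 0 := by
  intro h
  apply hx
  field_simp at h
  linarith

lemma phi14_D_pos {n : ℕ} (γ : Fin n → ℝ) (s : ℝ) (hs : 0 < s) (x : Fin n → ℝ)
    (hx : normSq x ≠ s) : 0 < (normSq x - s) ^ 2 + 4 * dotp γ x ^ 2 * s := by
  have h1 : 0 < (normSq x - s) ^ 2 := by
    have := sub_ne_zero.mpr hx
    positivity
  positivity

lemma grad_phi14 {n : ℕ} (γ : Fin n → ℝ) (s : ℝ) (hs : 0 < s) (x : Fin n → ℝ)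
    (hx : normSq x ≠ s) :
    grad (phi14 γ s) x = (4 / ((normSq x - s) ^ 2 + 4 * dotp γ x ^ 2 * s)) •
      (dotp γ x • x - ((1 / 2) * normSq x) • γ + (s / 2) • γ) := by
  have hne := phi14_ne s hs x hx
  have hD := phi14_D_pos γ s hs x hx
  obtain ⟨t, ht, rfl⟩ : ∃ t : ℝ, 0 < t ∧ s = t ^ 2 :=
    ⟨Real.sqrt s, Real.sqrt_pos.mpr hs, (Real.sq_sqrt hs.le).symm⟩
  have hst : Real.sqrt (t ^ 2) = t := Real.sqrt_sq ht.le
  funext i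
  have hv : HasDerivAt (fun r : ℝ => x + r • (Pi.single i (1 : ℝ) : Fin n → ℝ))
      (Pi.single i (1 : ℝ)) 0 := by
    simpa using ((hasDerivAt_id (0 : ℝ)).smul_const
      (Pi.single i (1 : ℝ) : Fin n → ℝ)).const_add x
  have hd : HasDerivAt (fun r : ℝ => dotp γ (x + r • (Pi.single i (1 : ℝ) : Fin n → ℝ)))
      (γ i) 0 := by
    have h := (hasFDerivAt_dotp γ (x + (0 : ℝ) • (Pi.single i (1 : ℝ) : Fin n → ℝ))).comp_hasDerivAt
      (0 : ℝ) hv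
    simpa [Function.comp_def, Pi.single_apply] using h
  have hN : HasDerivAt (fun r : ℝ => normSq (x + r • (Pi.single i (1 : ℝ) : Fin n → ℝ)))
      (2 * x i) 0 := by
    have h := (hasFDerivAt_normSq (x + (0 : ℝ) • (Pi.single i (1 : ℝ) : Fin n → ℝ))).comp_hasDerivAt
      (0 : ℝ) hv
    simpa [Function.comp_def, Pi.single_apply] using h
  have hdiff : DifferentiableAt ℝ (phi14 γ (t ^ 2)) x := by
    unfold phi14
    have h1 := (hasFDerivAt_dotp γ x).differentiableAt
    have h2 := (hasFDerivAt_normSq x).differentiableAt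
    have h3 : DifferentiableAt ℝ (fun y : Fin n → ℝ => normSq y / t ^ 2 - 1) x := by
      simp only [div_eq_mul_inv]
      exact (h2.mul_const _).sub_const _
    have h4 : DifferentiableAt ℝ (fun y : Fin n → ℝ => -2 * dotp γ y / Real.sqrt (t ^ 2)) x := by
      simp only [div_eq_mul_inv]
      exact (h1.const_mul (-2)).mul_const _
    have h5 : DifferentiableAt ℝ (fun y : Fin n → ℝ =>
        (-2 * dotp γ y / Real.sqrt (t ^ 2)) / (normSq y / t ^ 2 - 1)) x := by
      have h6 := h4.fun_mul (h3.fun_inv hne)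
      simpa only [div_eq_mul_inv] using h6
    exact h5.arctan.const_mul _
  have hx0 : x + (0 : ℝ) • (Pi.single i (1 : ℝ) : Fin n → ℝ) = x := by simp
  have e1 : HasDerivAt (fun r : ℝ => phi14 γ (t ^ 2) (x + r • (Pi.single i (1 : ℝ) : Fin n → ℝ)))
      (fderiv ℝ (phi14 γ (t ^ 2)) x (Pi.single i 1)) 0 := by
    have h := hdiff.hasFDerivAt
    rw [← hx0] at h
    have h' := h.comp_hasDerivAt (0 : ℝ) hv
    rw [hx0] at h'
    exact h'
  have e2 := (((((hd.const_mul (-2)).div_const (Real.sqrt (t ^ 2))).fun_div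
    ((hN.div_const (t ^ 2)).sub_const 1) (by rw [hx0]; exact hne)).arctan).const_mul
      (Real.sqrt (t ^ 2))⁻¹)
  have e3 := e1.unique e2
  unfold grad
  rw [e3, hx0, hst]
  simp only [Pi.smul_apply, Pi.add_apply, Pi.sub_apply, smul_eq_mul]
  generalize normSq x = N at *
  generalize dotp γ x = d at *
  have hN' : N - t ^ 2 ≠ 0 := sub_ne_zero.mpr hx
  have q1 : N / t ^ 2 - 1 = (N - t ^ 2) / t ^ 2 := by field_simp
  have q2 : 1 + (-2 * d / t / ((N - t ^ 2) / t ^ 2)) ^ 2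
      = ((N - t ^ 2) ^ 2 + 4 * d ^ 2 * t ^ 2) / (N - t ^ 2) ^ 2 := by
    field_simp
    ring
  rw [q1, q2]
  generalize hDD : (N - t ^ 2) ^ 2 + 4 * d ^ 2 * t ^ 2 = D at *
  have hD' := hD.ne'
  generalize hM : N - t ^ 2 = M at *
  obtain rfl : N = M + t ^ 2 := by linarith
  field_simp
  ring

lemma normSq_V {n : ℕ} (γ : Fin n → ℝ) (hγ : normSq γ = 1) (s : ℝ) (x : Fin n → ℝ) :
    normSq (dotp γ x • x - ((1 / 2) * normSq x) • γ + (s / 2) • γ)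
      = ((normSq x - s) ^ 2 + 4 * dotp γ x ^ 2 * s) / 4 := by
  have h : ∀ a b : ℝ, normSq (a • x + b • γ)
      = a ^ 2 * normSq x + 2 * a * b * dotp γ x + b ^ 2 * normSq γ := by
    intro a b
    simp only [normSq, dotp, Finset.mul_sum, ← Finset.sum_add_distrib, Pi.add_apply,
      Pi.smul_apply, smul_eq_mul]
    exact Finset.sum_congr rfl fun i _ => by ring
  have e : dotp γ x • x - ((1 / 2) * normSq x) • γ + (s / 2) • γ
      = dotp γ x • x + ((s - normSq x) / 2) • γ := by
    module
  rw [e, h, hγ]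
  ring

lemma normSq_smul14 {n : ℕ} (a : ℝ) (x : Fin n → ℝ) : normSq (a • x) = a ^ 2 * normSq x := by
  simp only [normSq, Finset.mul_sum, Pi.smul_apply, smul_eq_mul, mul_pow]

/-- `phi14` is smooth with nonvanishing gradient on `{|x|² ≠ s}` and its
associated conformal Killing field is `(γ·x)x − ½|x|²γ + (s/2)γ`. -/
theorem stmt_14 {n : ℕ} (hn : 3 ≤ n) (γ : Fin n → ℝ) (hγ : normSq γ = 1)
    (s : ℝ) (hs : 0 < s) (Ω : Set (Fin n → ℝ)) (hΩdef : Ω = {x | normSq x ≠ s}) :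
    ContDiffOn ℝ (⊤ : ℕ∞) (phi14 γ s) Ω ∧
    (∀ x ∈ Ω, grad (phi14 γ s) x ≠ 0) ∧
    (∀ x ∈ Ω, (normSq (grad (phi14 γ s) x))⁻¹ • grad (phi14 γ s) x
      = dotp γ x • x - ((1 / 2) * normSq x) • γ + (s / 2) • γ) := by
  subst hΩdef
  have key : ∀ x : Fin n → ℝ, normSq x ≠ s → normSq (grad (phi14 γ s) x)
      = 4 / ((normSq x - s) ^ 2 + 4 * dotp γ x ^ 2 * s) := by
    intro x hx
    have hD := (phi14_D_pos γ s hs x hx).ne'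
    rw [grad_phi14 γ s hs x hx, normSq_smul14, normSq_V γ hγ]
    field_simp
    try norm_num
  refine ⟨?_, ?_, ?_⟩
  · intro x hx
    apply ContDiffAt.contDiffWithinAt
    unfold phi14
    have hne := phi14_ne s hs x hx
    have h1 : ContDiffAt ℝ (⊤ : ℕ∞) (fun y => dotp γ y) x := by
      unfold dotp
      fun_prop
    have h2 : ContDiffAt ℝ (⊤ : ℕ∞) (fun y : Fin n → ℝ => normSq y) x := by
      unfold normSq
      fun_prop
    exact contDiffAt_const.mul ((((contDiffAt_const.mul h1).div_const _).fun_div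
      ((h2.div_const _).sub contDiffAt_const) hne).arctan)
  · intro x hx h0
    have hD := phi14_D_pos γ s hs x hx
    have hk := key x hx
    rw [h0] at hk
    have : normSq (0 : Fin n → ℝ) = 0 := by simp [normSq]
    rw [this] at hk
    have : 0 < 4 / ((normSq x - s) ^ 2 + 4 * dotp γ x ^ 2 * s) := by positivity
    linarith
  · intro x hx
    have hD := (phi14_D_pos γ s hs x hx).ne'
    rw [key x hx, grad_phi14 γ s hs x hx, smul_smul, inv_mul_cancel₀ (by positivity), one_smul]
end
end

section
/- Let n ≥ 3, let γ ∈ ℝⁿ with |γ| = 1, let s > 0, and let Ω = ℝⁿ ∖ {√s·γ, −√s·γ}. Define v(x) = (−2γ·x/√s)/(|x|²/s + 1). Then |v(x)| < 1 for all x ∈ Ω, so φ(x) = (1/√s)·artanh(v(x)) is a well-defined smooth function on Ω; moreover ∇φ is nowhere vanishing on Ω, and for all x ∈ Ω: ∇φ(x)/|∇φ(x)|² = (γ·x)x − (1/2)|x|²γ − (s/2)γ. -/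
open scoped BigOperators
open Matrix

noncomputable section

/-- The real inverse hyperbolic tangent, `artanh t = ½ log((1+t)/(1−t))` for `|t| < 1`. -/
def artanh (t : ℝ) : ℝ := (1 / 2) * Real.log ((1 + t) / (1 - t))

/-- The function `v(x) = (−2γ·x/√s)/(|x|²/s + 1)`. -/
def v15 {n : ℕ} (γ : Fin n → ℝ) (s : ℝ) (x : Fin n → ℝ) : ℝ :=
  (-2 * dotp γ x / Real.sqrt s) / (normSq x / s + 1)

/-- The weight `φ(x) = (1/√s) artanh(v(x))`. -/
def phi15 {n : ℕ} (γ : Fin n → ℝ) (s : ℝ) (x : Fin n → ℝ) : ℝ :=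
  (Real.sqrt s)⁻¹ * artanh (v15 γ s x)

lemma aux_line_dot {n : ℕ} (γ x : Fin n → ℝ) (i : Fin n) (t : ℝ) :
    dotp γ (x + t • Pi.single i (1:ℝ)) = dotp γ x + t * γ i := by
  simp only [dotp, Pi.add_apply, Pi.smul_apply, smul_eq_mul, mul_add, Finset.sum_add_distrib]
  congr 1
  rw [Finset.sum_eq_single i]
  · simp; ring
  · intro b _ hb; simp [hb]
  · simp

lemma aux_line_norm {n : ℕ} (x : Fin n → ℝ) (i : Fin n) (t : ℝ) :
    normSq (x + t • Pi.single i (1:ℝ)) = normSq x + 2 * t * x i + t ^ 2 := by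
  have : ∀ j, (x + t • Pi.single i (1:ℝ) : Fin n → ℝ) j ^ 2
      = x j ^ 2 + (2 * x j * t + t ^ 2) * (Pi.single i (1:ℝ) : Fin n → ℝ) j := by
    intro j
    by_cases h : j = i
    · subst h; simp; ring
    · simp [h]
  simp only [normSq, this, Finset.sum_add_distrib]
  rw [add_assoc]
  congr 1
  rw [Finset.sum_eq_single i]
  · simp; ring
  · intro b _ hb; simp [hb]
  · simp

lemma aux_comb {n : ℕ} (x γ : Fin n → ℝ) (a b : ℝ) :
    normSq (a • x + b • γ) = a ^ 2 * normSq x + 2 * a * b * dotp γ x + b ^ 2 * normSq γ := by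
  simp only [normSq, dotp, Finset.mul_sum, ← Finset.sum_add_distrib]
  refine Finset.sum_congr rfl fun i _ => ?_
  simp; ring

lemma aux_nonneg {n : ℕ} (x : Fin n → ℝ) : 0 ≤ normSq x :=
  Finset.sum_nonneg fun i _ => sq_nonneg _

lemma aux_pos {n : ℕ} (x : Fin n → ℝ) (h : x ≠ 0) : 0 < normSq x := by
  refine lt_of_le_of_ne (aux_nonneg x) fun h0 => h ?_
  have := (Finset.sum_eq_zero_iff_of_nonneg (fun i _ => sq_nonneg (x i))).1 h0.symm
  ext i
  simpa using this i (Finset.mem_univ i)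

lemma aux_phi {n : ℕ} (γ : Fin n → ℝ) (s : ℝ) (hs : 0 < s) (x : Fin n → ℝ) :
    phi15 γ s x = (Real.sqrt s)⁻¹ * ((1 / 2) * Real.log
      ((normSq x + s - 2 * dotp γ x * Real.sqrt s) /
        (normSq x + s + 2 * dotp γ x * Real.sqrt s))) := by
  have hN := aux_nonneg x
  have hr := Real.sqrt_pos.2 hs
  have hss := Real.sq_sqrt hs.le
  unfold phi15 artanh v15
  generalize Real.sqrt s = r at *
  subst hss
  have hD : normSq x + r ^ 2 ≠ 0 := by positivity
  have e1 : -2 * dotp γ x / r / (normSq x / r ^ 2 + 1)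
      = -(2 * dotp γ x * r) / (normSq x + r ^ 2) := by field_simp
  have e2 : 1 + -(2 * dotp γ x * r) / (normSq x + r ^ 2)
      = (normSq x + r ^ 2 - 2 * dotp γ x * r) / (normSq x + r ^ 2) := by field_simp; ring
  have e3 : 1 - -(2 * dotp γ x * r) / (normSq x + r ^ 2)
      = (normSq x + r ^ 2 + 2 * dotp γ x * r) / (normSq x + r ^ 2) := by field_simp; ring
  rw [e1, e2, e3, div_div_div_cancel_right₀ hD]

/-- on `ℝⁿ ∖ {√s γ, −√s γ}` one has `|v| < 1`, so `phi15` is a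
well-defined smooth function with nonvanishing gradient, whose associated conformal
Killing field is `(γ·x)x − ½|x|²γ − (s/2)γ`. -/
theorem stmt_15 {n : ℕ} (hn : 3 ≤ n) (γ : Fin n → ℝ) (hγ : normSq γ = 1)
    (s : ℝ) (hs : 0 < s) (Ω : Set (Fin n → ℝ))
    (hΩdef : Ω = {x | x ≠ Real.sqrt s • γ ∧ x ≠ -(Real.sqrt s • γ)}) :
    (∀ x ∈ Ω, |v15 γ s x| < 1) ∧
    ContDiffOn ℝ (⊤ : ℕ∞) (phi15 γ s) Ω ∧
    (∀ x ∈ Ω, grad (phi15 γ s) x ≠ 0) ∧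
    (∀ x ∈ Ω, (normSq (grad (phi15 γ s) x))⁻¹ • grad (phi15 γ s) x
      = dotp γ x • x - ((1 / 2) * normSq x) • γ - (s / 2) • γ) := by
  have hphi : phi15 γ s = _ := funext (aux_phi γ s hs)
  have hr := Real.sqrt_pos.2 hs
  have hss := Real.sq_sqrt hs.le
  have hP : ∀ x ∈ Ω, 0 < normSq x + s - 2 * dotp γ x * Real.sqrt s := by
    intro x hx
    rw [hΩdef] at hx
    have h := aux_pos ((1:ℝ) • x + (-Real.sqrt s) • γ) (by
      intro h; apply hx.1; simpa [← sub_eq_add_neg, sub_eq_zero] using h)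
    rw [aux_comb, hγ] at h
    nlinarith
  have hM : ∀ x ∈ Ω, 0 < normSq x + s + 2 * dotp γ x * Real.sqrt s := by
    intro x hx
    rw [hΩdef] at hx
    have h := aux_pos ((1:ℝ) • x + (Real.sqrt s) • γ) (by
      intro h; apply hx.2; simpa [add_eq_zero_iff_eq_neg] using h)
    rw [aux_comb, hγ] at h
    nlinarith
  have hC : ∀ x ∈ Ω, ContDiffAt ℝ (⊤ : ℕ∞) (phi15 γ s) x := by
    intro x hx
    have h1 := (hP x hx).ne'
    have h2 := (hM x hx).ne'
    rw [hphi]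
    have hd : ContDiff ℝ (⊤ : ℕ∞) (fun x : Fin n → ℝ => dotp γ x) := by
      unfold dotp; fun_prop
    have hN : ContDiff ℝ (⊤ : ℕ∞) (fun x : Fin n → ℝ => normSq x) := by
      unfold normSq; fun_prop
    refine contDiffAt_const.mul (contDiffAt_const.mul (ContDiffAt.log (ContDiffAt.div ?_ ?_ h2)
      (div_ne_zero h1 h2)))
    · fun_prop
    · fun_prop
  have hG : ∀ x ∈ Ω, grad (phi15 γ s) x
      = (4 / ((normSq x + s) ^ 2 - 4 * dotp γ x ^ 2 * s)) •
        (dotp γ x • x + (-((normSq x + s) / 2)) • γ) := by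
    intro x hx
    have h1 := hP x hx
    have h2 := hM x hx
    have hQ : (normSq x + s) ^ 2 - 4 * dotp γ x ^ 2 * s
      = (normSq x + s - 2 * dotp γ x * Real.sqrt s) *
        (normSq x + s + 2 * dotp γ x * Real.sqrt s) := by
      linear_combination 4 * dotp γ x ^ 2 * hss
    ext i
    unfold grad
    rw [← ((hC x hx).differentiableAt (by simp)).lineDeriv_eq_fderiv]
    apply HasLineDerivAt.lineDeriv
    unfold HasLineDerivAt
    simp only [hphi, aux_line_dot, aux_line_norm, hQ]
    simp only [Pi.smul_apply, Pi.add_apply, smul_eq_mul]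
    generalize Real.sqrt s = r at *
    generalize dotp γ x = d at *
    generalize normSq x = N at *
    have hd : HasDerivAt (fun t : ℝ => 2 * (d + t * γ i) * r) (2 * γ i * r) 0 := by
      have := ((((hasDerivAt_id (0:ℝ)).mul_const (γ i)).const_add d).const_mul 2).mul_const r
      simpa using this
    have hN : HasDerivAt (fun t : ℝ => N + 2 * t * x i + t ^ 2 + s) (2 * x i) 0 := by
      have := (((((hasDerivAt_id (0:ℝ)).const_mul 2).mul_const (x i)).const_add N).add
        (hasDerivAt_pow 2 (0:ℝ))).add_const s
      exact this.congr_deriv (by simp)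
    have := (((hN.sub hd).div (hN.add hd) (by simpa using h2.ne')).log
      (by simpa using ⟨h1.ne', h2.ne'⟩)).const_mul (1/2) |>.const_mul r⁻¹
    refine this.congr_deriv ?_
    simp
    have h1' := h1.ne'
    have h2' := h2.ne'
    subst hss
    field_simp
    ring
  have hQ : ∀ x ∈ Ω, 0 < (normSq x + s) ^ 2 - 4 * dotp γ x ^ 2 * s := by
    intro x hx
    have := mul_pos (hP x hx) (hM x hx)
    nlinarith
  have hNG : ∀ x ∈ Ω, normSq (grad (phi15 γ s) x)
      = 4 / ((normSq x + s) ^ 2 - 4 * dotp γ x ^ 2 * s) := by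
    intro x hx
    have := (hQ x hx).ne'
    rw [hG x hx, smul_add, smul_smul, smul_smul, aux_comb, hγ]
    obtain ⟨Q, hQe⟩ : ∃ Q, Q = (normSq x + s) ^ 2 - 4 * dotp γ x ^ 2 * s := ⟨_, rfl⟩
    rw [← hQe] at this ⊢
    field_simp
    linear_combination (-4) * hQe
  refine ⟨?_, fun x hx => (hC x hx).contDiffWithinAt, ?_, ?_⟩
  · intro x hx
    have h1 := hP x hx
    have h2 := hM x hx
    have hN := aux_nonneg x
    have hD : 0 < normSq x + s := by positivity
    have e1 : v15 γ s x = -(2 * dotp γ x * Real.sqrt s) / (normSq x + s) := by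
      unfold v15
      generalize Real.sqrt s = r at *
      subst hss
      field_simp
    rw [e1, abs_lt, lt_div_iff₀ hD, div_lt_iff₀ hD]
    constructor <;> linarith
  · intro x hx h0
    have h := hNG x hx
    rw [h0] at h
    have h3 := div_pos (by norm_num : (0:ℝ) < 4) (hQ x hx)
    rw [← h] at h3
    simp [normSq] at h3
  · intro x hx
    have := (hQ x hx).ne'
    rw [hNG x hx, hG x hx, smul_smul, inv_mul_cancel₀ (by positivity), one_smul]
    ext i
    simp
    ring
end
end

section
/- Let n ≥ 3, let e₁ denote the first standard basis vector of ℝⁿ, and define F(x) = (x − e₁)/|x − e₁|² + (1/2)e₁ for x ≠ e₁. Then for every x ∈ ℝⁿ with x ≠ e₁ and x ≠ −e₁: |F(x)|² = |x + e₁|²/(4|x − e₁|²), and log(2|F(x)|) = artanh( 2(e₁·x)/(|x|² + 1) ). -/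
open scoped BigOperators
open Matrix

noncomputable section

/-- The `i`-th standard basis vector of `ℝⁿ`. -/
def stdBasis {n : ℕ} (i : ℕ) (h : i < n) : Fin n → ℝ := Pi.single (⟨i, h⟩ : Fin n) (1 : ℝ)

/-- The conformal map `F(x) = (x − e₁)/|x − e₁|² + ½ e₁`. -/
def F16 {n : ℕ} (e₁ : Fin n → ℝ) (x : Fin n → ℝ) : Fin n → ℝ :=
  (normSq (x - e₁))⁻¹ • (x - e₁) + (1 / 2 : ℝ) • e₁

theorem normSq_comb {n : ℕ} (a b : ℝ) (u v : Fin n → ℝ) :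
    normSq (a • u + b • v) = a ^ 2 * normSq u + 2 * a * b * dotp v u + b ^ 2 * normSq v := by
  simp only [normSq, dotp, Finset.mul_sum, ← Finset.sum_add_distrib]
  refine Finset.sum_congr rfl fun i _ => ?_
  simp only [Pi.add_apply, Pi.smul_apply, smul_eq_mul]
  ring

theorem normSq_pos_of_ne {n : ℕ} (u : Fin n → ℝ) (h : u ≠ 0) : 0 < normSq u := by
  obtain ⟨i, hi⟩ := Function.ne_iff.mp h
  exact Finset.sum_pos' (fun i _ => sq_nonneg _) ⟨i, Finset.mem_univ i, by
    have : u i ≠ 0 := hi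
    positivity⟩

theorem normSq_stdBasis {n : ℕ} (i : ℕ) (h : i < n) : normSq (stdBasis i h) = 1 := by
  simp [normSq, _root_.stdBasis, Pi.single_apply]

theorem aux16 {n : ℕ} (e x : Fin n → ℝ) (he : normSq e = 1) (hx1 : x ≠ e) (hx2 : x ≠ -e) :
    normSq (F16 e x) = normSq (x + e) / (4 * normSq (x - e)) ∧
    Real.log (2 * Real.sqrt (normSq (F16 e x))) = artanh (2 * dotp e x / (normSq x + 1)) := by
  have hm : normSq (x - e) = normSq x - 2 * dotp e x + 1 := by
    have := normSq_comb 1 (-1) x e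
    rw [he, one_smul, neg_one_smul, ← sub_eq_add_neg] at this
    rw [this]; ring
  have hp : normSq (x + e) = normSq x + 2 * dotp e x + 1 := by
    have := normSq_comb 1 1 x e
    rw [he, one_smul, one_smul] at this
    rw [this]; ring
  have pm := normSq_pos_of_ne (x - e) (sub_ne_zero.mpr hx1)
  have pp := normSq_pos_of_ne (x + e) (fun h => hx2 (eq_neg_of_add_eq_zero_left h))
  have hN : 0 ≤ normSq x := Finset.sum_nonneg fun i _ => sq_nonneg _
  have h1 : normSq (F16 e x) = normSq (x + e) / (4 * normSq (x - e)) := by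
    have hF : F16 e x = (normSq (x - e))⁻¹ • x + (1 / 2 - (normSq (x - e))⁻¹) • e := by
      simp only [F16]; module
    rw [hF, normSq_comb, he, hp]
    have hN' : normSq x = normSq (x - e) + 2 * dotp e x - 1 := by rw [hm]; ring
    rw [hN']
    field_simp
    ring
  refine ⟨h1, ?_⟩
  have h2 : 2 * Real.sqrt (normSq (F16 e x)) = Real.sqrt (normSq (x + e) / normSq (x - e)) := by
    rw [h1, eq_comm, Real.sqrt_eq_iff_mul_self_eq (by positivity) (by positivity)]
    rw [mul_mul_mul_comm, Real.mul_self_sqrt (by positivity)]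
    field_simp
    norm_num
  rw [h2, Real.log_sqrt (by positivity), artanh]
  have h3 : (1 + 2 * dotp e x / (normSq x + 1)) / (1 - 2 * dotp e x / (normSq x + 1))
      = normSq (x + e) / normSq (x - e) := by
    have hne : normSq x + 1 ≠ 0 := by positivity
    have a1 : 1 + 2 * dotp e x / (normSq x + 1) = normSq (x + e) / (normSq x + 1) := by
      rw [hp]; field_simp; ring
    have a2 : 1 - 2 * dotp e x / (normSq x + 1) = normSq (x - e) / (normSq x + 1) := by
      rw [hm]; field_simp; ring
    rw [a1, a2, div_div_div_cancel_right₀ hne]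
  rw [h3]; ring

/-- for the conformal map `F(x) = (x−e₁)/|x−e₁|² + ½e₁` one has
`|F(x)|² = |x+e₁|²/(4|x−e₁|²)` and `log(2|F(x)|) = artanh(2(e₁·x)/(|x|²+1))`,
so the log-type and artanh-type weights lie in the same conformal orbit. -/
theorem stmt_16 {n : ℕ} (hn : 3 ≤ n) (x : Fin n → ℝ)
    (hx1 : x ≠ stdBasis 0 (by omega)) (hx2 : x ≠ -stdBasis 0 (by omega)) :
    normSq (F16 (stdBasis 0 (by omega)) x)
        = normSq (x + stdBasis 0 (by omega)) / (4 * normSq (x - stdBasis 0 (by omega))) ∧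
    Real.log (2 * Real.sqrt (normSq (F16 (stdBasis 0 (by omega)) x)))
        = artanh (2 * dotp (stdBasis 0 (by omega)) x / (normSq x + 1)) := by
  exact aux16 _ x (normSq_stdBasis _ _) hx1 hx2
end
end

section
/- Let n ≥ 3, let e₁, e₂ denote the first two standard basis vectors of ℝⁿ, and define F(x) = (x − e₁)/|x − e₁|² + (1/2)e₁ for x ≠ e₁. Then for every x ∈ ℝⁿ with x ≠ e₁ and |x| ≠ 1: e₁·F(x) = (|x|² − 1)/(2|x − e₁|²) (in particular e₁·F(x) ≠ 0), and (e₂·F(x))/(e₁·F(x)) = 2(e₂·x)/(|x|² − 1). -/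
open scoped BigOperators
open Matrix

noncomputable section

/-- The conformal map `F(x) = (x − e₁)/|x − e₁|² + ½ e₁`. -/
def F17 {n : ℕ} (e₁ : Fin n → ℝ) (x : Fin n → ℝ) : Fin n → ℝ :=
  (normSq (x - e₁))⁻¹ • (x - e₁) + (1 / 2 : ℝ) • e₁

/-- for the conformal map `F(x) = (x−e₁)/|x−e₁|² + ½e₁` and `|x| ≠ 1`,
`e₁·F(x) = (|x|²−1)/(2|x−e₁|²) ≠ 0` and `(e₂·F(x))/(e₁·F(x)) = 2(e₂·x)/(|x|²−1)`,
so the two arctan-type weights lie in the same conformal orbit. -/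
theorem stmt_17 {n : ℕ} (hn : 3 ≤ n) (x : Fin n → ℝ)
    (hx1 : x ≠ stdBasis 0 (by omega)) (hx2 : normSq x ≠ 1) :
    dotp (stdBasis 0 (by omega)) (F17 (stdBasis 0 (by omega)) x)
        = (normSq x - 1) / (2 * normSq (x - stdBasis 0 (by omega))) ∧
    dotp (stdBasis 0 (by omega)) (F17 (stdBasis 0 (by omega)) x) ≠ 0 ∧
    dotp (stdBasis 1 (by omega)) (F17 (stdBasis 0 (by omega)) x)
        / dotp (stdBasis 0 (by omega)) (F17 (stdBasis 0 (by omega)) x)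
      = 2 * dotp (stdBasis 1 (by omega)) x / (normSq x - 1) := by
  have hd : ∀ (i : ℕ) (h : i < n) (y : Fin n → ℝ), dotp (stdBasis i h) y = y ⟨i, h⟩ := by
    intro i h y
    simp [dotp, _root_.stdBasis, Pi.single_apply]
  have h0 : 0 < n := by omega
  have h1 : 1 < n := by omega
  have hN : normSq (x - stdBasis 0 h0) = normSq x - 2 * x ⟨0, h0⟩ + 1 := by
    have hk : ∀ i, (x - stdBasis 0 h0) i ^ 2
        = x i ^ 2 - 2 * (stdBasis 0 h0 i * x i) + stdBasis 0 h0 i * stdBasis 0 h0 i := by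
      intro i
      simp only [Pi.sub_apply]
      ring
    have e1 := hd 0 h0 x
    have e2 := hd 0 h0 (stdBasis 0 h0)
    have e3 : (stdBasis 0 h0 : Fin n → ℝ) ⟨0, h0⟩ = 1 := by simp [_root_.stdBasis]
    rw [e3] at e2
    unfold dotp at e1 e2
    unfold normSq
    simp only [hk]
    rw [Finset.sum_add_distrib, Finset.sum_sub_distrib, ← Finset.mul_sum, e1, e2]
  have hN0 : normSq (x - stdBasis 0 h0) ≠ 0 := by
    intro h
    apply hx1
    unfold normSq at h
    rw [Finset.sum_eq_zero_iff_of_nonneg (fun i _ => sq_nonneg _)] at h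
    funext i
    have := h i (Finset.mem_univ i)
    have h2 := pow_eq_zero_iff (two_ne_zero) |>.1 this
    exact sub_eq_zero.1 h2
  have hm : normSq x - 1 ≠ 0 := sub_ne_zero.2 hx2
  have hA : dotp (stdBasis 0 h0) (F17 (stdBasis 0 h0) x)
      = (normSq x - 1) / (2 * normSq (x - stdBasis 0 h0)) := by
    have e3 : (stdBasis 0 h0 : Fin n → ℝ) ⟨0, h0⟩ = 1 := by simp [_root_.stdBasis]
    rw [hd]
    simp only [F17, Pi.add_apply, Pi.smul_apply, Pi.sub_apply, smul_eq_mul, e3]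
    field_simp
    rw [hN]
    ring
  have hB : dotp (stdBasis 1 h1) (F17 (stdBasis 0 h0) x)
      = x ⟨1, h1⟩ / normSq (x - stdBasis 0 h0) := by
    have e3 : (stdBasis 0 h0 : Fin n → ℝ) ⟨1, h1⟩ = 0 := by simp [_root_.stdBasis, Pi.single_apply]
    rw [hd]
    simp only [F17, Pi.add_apply, Pi.smul_apply, Pi.sub_apply, smul_eq_mul, e3]
    field_simp
    ring
  refine ⟨hA, ?_, ?_⟩
  · rw [hA]
    exact div_ne_zero hm (mul_ne_zero two_ne_zero hN0)
  · rw [hA, hB, hd]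
    field_simp
end
end

section
/- Let T be a symmetric bilinear form on Euclidean ℝ³. Suppose there exist linearly independent vectors v₁, v₂, v₃ ∈ ℝ³ such that for each i ∈ {1,2,3}: T(vᵢ, vᵢ) = 0 and T(w, w′) = 0 for all w, w′ ∈ ℝ³ orthogonal to vᵢ. Then T = 0. -/
open scoped BigOperators

noncomputable section

/-- a symmetric bilinear form on Euclidean `ℝ³` admitting three linearly
independent eigenflag directions (i.e. vectors `v` with `T(v,v) = 0` and `T(w,w') = 0`
for all `w, w' ⊥ v`) vanishes identically. -/
theorem stmt_19 (T : (Fin 3 → ℝ) →ₗ[ℝ] (Fin 3 → ℝ) →ₗ[ℝ] ℝ)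
    (hsymm : ∀ u v : Fin 3 → ℝ, T u v = T v u)
    (v : Fin 3 → (Fin 3 → ℝ)) (hli : LinearIndependent ℝ v)
    (h : ∀ i : Fin 3, T (v i) (v i) = 0 ∧
      ∀ w w' : Fin 3 → ℝ, dotp w (v i) = 0 → dotp w' (v i) = 0 → T w w' = 0) :
    T = 0 := by
  have hu : IsUnit (Matrix.of v) := by
    rw [← Matrix.linearIndependent_rows_iff_isUnit]
    exact hli
  obtain ⟨E, hVE, hEV⟩ := isUnit_iff_exists.mp hu
  have hd : ∀ j k : Fin 3, k ≠ j → dotp (fun i => E i j) (v k) = 0 := by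
    intro j k hkj
    have h1 := congrFun (congrFun hVE k) j
    rw [Matrix.mul_apply, Matrix.one_apply_ne hkj] at h1
    rw [← h1]
    unfold dotp
    exact Finset.sum_congr rfl (fun i _ => mul_comm _ _)
  have hx : ∀ x : Fin 3 → ℝ, x = ∑ j, (Matrix.of v).mulVec x j • (fun i => E i j) := by
    intro x
    have h1 : E.mulVec ((Matrix.of v).mulVec x) = x := by
      rw [Matrix.mulVec_mulVec, hEV, Matrix.one_mulVec]
    conv_lhs => rw [← h1]
    ext i
    rw [Matrix.mulVec, dotProduct, Finset.sum_apply]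
    exact Finset.sum_congr rfl (fun j _ => mul_comm _ _)
  have hT : ∀ a b : Fin 3, T (fun i => E i a) (fun i => E i b) = 0 := by
    intro a b
    obtain ⟨k, hka, hkb⟩ : ∃ k : Fin 3, k ≠ a ∧ k ≠ b := by
      revert a b; decide
    exact (h k).2 _ _ (hd a k hka) (hd b k hkb)
  refine LinearMap.ext fun x => LinearMap.ext fun y => ?_
  rw [hx x, hx y]
  simp only [map_sum, map_smul, LinearMap.sum_apply, LinearMap.smul_apply, hT, smul_zero,
    Finset.sum_const_zero, LinearMap.zero_apply]
end
end
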